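/- Suppose X is a finite-dimensional vector space over an algebraically closed field F of characteristic 0 (e.g., F = ℂ), and T is a linear transformation on X. If S is a linear transformation such that for every x ∈ X, Sx ∈ {0} ∪ {T^n x : n ≥ 0}, then S = 0 or S = T^n for some n ≥ 0. -/

import Mathlib

open Polynomial in
theorem aux_irred {R : Type*} [CommRing R] [IsDomain R] (p : R) (hp : Prime p) (N : ℕ) (hN : 0 < N) :
    Irreducible (X ^ N - C p : R[X]) := by
  have hm : (X ^ N - C p : R[X]).Monic := monic_X_pow_sub_C p hN.ne'
  have hd : (X ^ N - C p : R[X]).natDegree = N := natDegree_X_pow_sub_C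
  have hP : (Ideal.span {p}).IsPrime := (Ideal.span_singleton_prime hp.ne_zero).2 hp
  refine Polynomial.IsEisensteinAt.irreducible (𝓟 := Ideal.span {p}) ⟨?_, ?_, ?_⟩ hP
    hm.isPrimitive (by omega)
  · rw [hm.leadingCoeff]
    exact fun h => hP.ne_top ((Ideal.eq_top_iff_one _).2 h)
  · intro n hn
    rw [hd] at hn
    rw [coeff_sub, coeff_X_pow, if_neg hn.ne, coeff_C]
    split_ifs
    · simpa using Ideal.mem_span_singleton_self p
    · simp
  · rw [coeff_sub, coeff_X_pow, if_neg hN.ne, coeff_C_zero, zero_sub, neg_mem_iff,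
      Ideal.span_singleton_pow, Ideal.mem_span_singleton]
    intro h
    have h2 : p * p ∣ p * 1 := by simpa [sq] using h
    exact hp.not_isUnit (isUnit_of_dvd_one ((mul_dvd_mul_iff_left hp.ne_zero).1 h2))

open Polynomial in
theorem aux_field {R F : Type*} [CommRing R] [IsDomain R] [IsIntegrallyClosed R]
    [Field F] [IsAlgClosed F] [Algebra R F] [FaithfulSMul R F] [Algebra.IsAlgebraic R F]
    (p : R) (hp : Prime p) (s : Set F) (hs : s.Finite) (d : ℕ) :
    ∃ (K : Subfield F), s ⊆ K ∧ ∃ α : F, LinearIndependent K (fun i : Fin d => α ^ (i : ℕ)) := by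
  let k := FractionRing R
  let : Algebra k F := FractionRing.liftAlgebra R F
  have : IsScalarTower R k F := FractionRing.isScalarTower_liftAlgebra R F
  have : Algebra.IsAlgebraic k F := (IsFractionRing.comap_isAlgebraic_iff (A := R) (K := k) (C := F)).1 inferInstance
  have : Algebra.IsIntegral k F := Algebra.isAlgebraic_iff_isIntegral.1 inferInstance
  have := hs.to_subtype
  let K := IntermediateField.adjoin k s
  have : FiniteDimensional k K :=
    IntermediateField.finiteDimensional_adjoin (fun x _ => Algebra.IsIntegral.isIntegral x)
  have hKpos : 0 < Module.finrank k K := Module.finrank_pos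
  set N := (d + 1) * Module.finrank k K with hN
  have hNpos : 0 < N := by positivity
  have hirr : Irreducible ((X ^ N - C p : R[X]).map (algebraMap R k)) :=
    ((monic_X_pow_sub_C p hNpos.ne').irreducible_iff_irreducible_map_fraction_map).1
      (aux_irred p hp N hNpos)
  obtain ⟨α, hα⟩ := IsAlgClosed.exists_pow_nat_eq (algebraMap R F p) hNpos
  have hmin : minpoly k α = (X ^ N - C p : R[X]).map (algebraMap R k) := by
    refine (minpoly.eq_of_irreducible_of_monic hirr ?_ ((monic_X_pow_sub_C p hNpos.ne').map _)).symm
    rw [aeval_map_algebraMap]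
    simp [hα]
  have hdeg : (minpoly k α).natDegree = N := by
    rw [hmin, (monic_X_pow_sub_C p hNpos.ne').natDegree_map, natDegree_X_pow_sub_C]
  have hint : IsIntegral K α := (Algebra.IsIntegral.isIntegral (R := k) α).tower_top
  let L := IntermediateField.adjoin K ({α} : Set F)
  have : FiniteDimensional K L := IntermediateField.adjoin.finiteDimensional hint
  have : FiniteDimensional k L := FiniteDimensional.trans k K L
  have : IsScalarTower k L F := IsScalarTower.of_algebraMap_eq (fun _ => rfl)
  have hfr : Module.finrank K L = (minpoly K α).natDegree := IntermediateField.adjoin.finrank hint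
  have hmul : Module.finrank k K * Module.finrank K L = Module.finrank k L :=
    Module.finrank_mul_finrank k K L
  have hle : N ≤ Module.finrank k L := by
    have h := minpoly.natDegree_le (A := k) (IntermediateField.AdjoinSimple.gen K α)
    rwa [← minpoly.algebraMap_eq (A := k) (algebraMap L F).injective,
      IntermediateField.AdjoinSimple.algebraMap_gen, hdeg] at h
  have hdle : d ≤ (minpoly K α).natDegree := by
    rw [← hfr]
    rw [← hmul, hN, mul_comm] at hle
    have := Nat.le_of_mul_le_mul_left hle hKpos
    omega
  refine ⟨K.toSubfield, IntermediateField.subset_adjoin k s, α, ?_⟩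
  exact (linearIndependent_pow (K := K) α).comp (Fin.castLE hdle) (Fin.castLE_injective hdle)

theorem aux_main {F : Type*} [Field F] [IsAlgClosed F] [CharZero F]
    (s : Set F) (hs : s.Finite) (d : ℕ) :
    ∃ (K : Subfield F), s ⊆ K ∧ ∃ α : F, LinearIndependent K (fun i : Fin d => α ^ (i : ℕ)) := by
  have : FaithfulSMul ℤ F := (faithfulSMul_iff_algebraMap_injective ℤ F).2
    (by simpa using Int.cast_injective)
  obtain ⟨ι, x, hx⟩ := exists_isTranscendenceBasis' ℤ F
  have := hx.isAlgebraic
  let e := hx.1.aevalEquiv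
  have : UniqueFactorizationMonoid (Algebra.adjoin ℤ (Set.range x)) :=
    e.toMulEquiv.uniqueFactorizationMonoid inferInstance
  have h2 : Prime (MvPolynomial.C 2 : MvPolynomial ι ℤ) :=
    (MvPolynomial.prime_C_iff ι).2 Int.prime_two
  exact aux_field (e (MvPolynomial.C 2)) ((MulEquiv.prime_iff e.toMulEquiv).2 h2) s hs d

theorem aux_mat {F : Type*} [Field F] (d : ℕ) (K : Subfield F) (α : F)
    (h : LinearIndependent K (fun i : Fin d => α ^ (i : ℕ)))
    (M : Matrix (Fin d) (Fin d) K)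
    (hM : (M.map (algebraMap K F)).mulVec (fun i : Fin d => α ^ (i : ℕ)) = 0) : M = 0 := by
  ext i j
  have hi := congrFun hM i
  rw [Fintype.linearIndependent_iff] at h
  have := h (M i) (by simpa [Matrix.mulVec, dotProduct, Algebra.smul_def] using hi) j
  simp [this]

theorem stmt_11 {F : Type*} [Field F] [IsAlgClosed F] [CharZero F]
    {X : Type*} [AddCommGroup X] [Module F X] [FiniteDimensional F X]
    (T S : Module.End F X)
    (hS : ∀ x : X, S x = 0 ∨ ∃ n : ℕ, S x = (T ^ n) x) :
    S = 0 ∨ ∃ n : ℕ, S = T ^ n := by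
  let b := Module.finBasis F X
  set d := Module.finrank F X
  let φ := LinearMap.toMatrixAlgEquiv b
  obtain ⟨K, hK, α, hα⟩ := aux_main
    (Set.range (fun ij : Fin d × Fin d => φ T ij.1 ij.2) ∪
      Set.range (fun ij : Fin d × Fin d => φ S ij.1 ij.2))
    ((Set.finite_range _).union (Set.finite_range _)) d
  let A : Matrix (Fin d) (Fin d) K := fun i j => ⟨φ T i j, hK (Or.inl ⟨(i, j), rfl⟩)⟩
  let B : Matrix (Fin d) (Fin d) K := fun i j => ⟨φ S i j, hK (Or.inr ⟨(i, j), rfl⟩)⟩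
  let ψ := (algebraMap K F).mapMatrix (m := Fin d)
  have hA : ψ A = φ T := by ext i j; rfl
  have hB : ψ B = φ S := by ext i j; rfl
  let x : X := b.equivFun.symm (fun i : Fin d => α ^ (i : ℕ))
  have key : ∀ (U : Module.End F X) (M : Matrix (Fin d) (Fin d) K), ψ M = φ U → U x = 0 → U = 0 := by
    intro U M hM hU
    have h1 : (φ U).mulVec (b.repr x) = b.repr (U x) := LinearMap.toMatrix_mulVec_repr b b U x
    have hx : (b.repr x : Fin d → F) = (fun i : Fin d => α ^ (i : ℕ)) :=
      b.equivFun.apply_symm_apply _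
    rw [hU, hx, ← hM] at h1
    have hM0 : M = 0 := aux_mat d K α hα M (by
      rw [map_zero] at h1
      exact h1)
    rw [hM0, map_zero] at hM
    exact (map_eq_zero_iff φ φ.injective).1 hM.symm
  rcases hS x with h | ⟨n, h⟩
  · exact Or.inl (key S B hB h)
  · refine Or.inr ⟨n, sub_eq_zero.1 (key (S - T ^ n) (B - A ^ n) ?_ ?_)⟩
    · rw [map_sub, map_sub, map_pow, map_pow, hA, hB]
    · simp [h]
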